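/- Every finite simple type system on Ω is either nuclear, atomic binuclear, or atomic quasinuclear. -/

import Mathlib

/-!
Let `S` be a child-closed set of types of a simple type system containing two different types.
Declare two addresses `α`, `β` related when, for all but finitely many words `γ`, the addresses
`αγ`, `βγ` are equivalent or both lie in `S`. This is a quotient identifying the types in `S`, so by
simplicity it is universal. Comparing the empty address with an address in `S` then shows that `S`
contains all but finitely many addresses.

Call an address atomic if it is equivalent to both of its children. If two atomic addresses are
inequivalent, the union of their types is such a set `S`, and the system is atomic binuclear.
If `α` is not atomic, then its proper descendants represent at least two types by reducedness, so
they represent the types of all but finitely many addresses. There are only finitely many types,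
hence all but finitely many addresses are equivalent to proper descendants of every non-atomic
address. Such addresses, when not atomic themselves, form a strongly connected set whose only exit
is into the atomic ones.
-/

/-- Addresses: finite words over the alphabet `{0,1}` (`Bool`). -/
abbrev Addr : Type := List Bool

/-- Cantor space: infinite words over the alphabet `{0,1}`. -/
abbrev Cantor : Type := ℕ → Bool

/-- Prepend the finite word `α` to the infinite word `w`. -/
def wcat (α : Addr) (w : Cantor) : Cantor := fun n =>
  if h : n < α.length then α.get ⟨n, h⟩ else w (n - α.length)

/-- The cone of the address `α`: the set of infinite words having `α` as a prefix. -/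
def cone (α : Addr) : Set Cantor := Set.range (wcat α)

/-- `g` is a prefix substitution map: there are partitions of Cantor space into cones
`(A i)𝔠` and `(B i)𝔠` such that `g` maps `(A i) w` to `(B i) w`. -/
def IsPrefixSubst (g : Equiv.Perm Cantor) : Prop :=
  ∃ (n : ℕ) (A B : Fin n → Addr),
    (∀ i j, i ≠ j → Disjoint (cone (A i)) (cone (A j))) ∧
    (⋃ i, cone (A i)) = Set.univ ∧
    (∀ i j, i ≠ j → Disjoint (cone (B i)) (cone (B j))) ∧
    (⋃ i, cone (B i)) = Set.univ ∧
    (∀ i w, g (wcat (A i) w) = wcat (B i) w)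

/-- Thompson's group `V`, as the set of prefix substitution maps inside `Equiv.Perm Cantor`. -/
def VSet : Set (Equiv.Perm Cantor) := { g | IsPrefixSubst g }

/-- `α ^ g = β` : `g` maps the cone of `α` onto the cone of `β` by the prefix
substitution `α ↦ β`. -/
def actsOn (g : Equiv.Perm Cantor) (α β : Addr) : Prop :=
  ∀ w, g (wcat α w) = wcat β w

/-- A subset of `Equiv.Perm Cantor` that is closed under the group operations. -/
def IsSubgroupSet (M : Set (Equiv.Perm Cantor)) : Prop :=
  (1 : Equiv.Perm Cantor) ∈ M ∧ (∀ g ∈ M, ∀ h ∈ M, g * h ∈ M) ∧ ∀ g ∈ M, g⁻¹ ∈ M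

/-- `M` is a maximal subgroup of Thompson's group `V`. -/
def IsMaximalSubgroupOfV (M : Set (Equiv.Perm Cantor)) : Prop :=
  IsSubgroupSet M ∧ M ⊆ VSet ∧ M ≠ VSet ∧
    ∀ H : Set (Equiv.Perm Cantor),
      IsSubgroupSet H → M ⊆ H → H ⊆ VSet → H = M ∨ H = VSet

/-- A relation on addresses is coherent if `α ∼ β` implies `α0 ∼ β0` and `α1 ∼ β1`. -/
def Coherent (r : Addr → Addr → Prop) : Prop :=
  ∀ α β, r α β → r (α ++ [false]) (β ++ [false]) ∧ r (α ++ [true]) (β ++ [true])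

/-- A relation on addresses is reduced if `α0 ∼ β0` and `α1 ∼ β1` imply `α ∼ β`. -/
def Reduced (r : Addr → Addr → Prop) : Prop :=
  ∀ α β, r (α ++ [false]) (β ++ [false]) → r (α ++ [true]) (β ++ [true]) → r α β

/-- A type system: a coherent and reduced equivalence relation on addresses
(identified with the partition of `Ω` into its classes). -/
def IsTypeSystem (r : Addr → Addr → Prop) : Prop :=
  Equivalence r ∧ Coherent r ∧ Reduced r

/-- `g` fixes the parts of `r`: for all but finitely many addresses `α`, the image
`α ^ g` is defined and equivalent to `α`. -/
def FixesParts (r : Addr → Addr → Prop) (g : Equiv.Perm Cantor) : Prop :=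
  { α : Addr | ¬ ∃ β, actsOn g α β ∧ r α β }.Finite

/-- `g` stabilizes `r`: on some cofinite set of addresses, `α ^ g` is defined and `g`
preserves equivalence and inequivalence of addresses. -/
def Stabilizes (r : Addr → Addr → Prop) (g : Equiv.Perm Cantor) : Prop :=
  ∃ Ω₀ : Set Addr, Ω₀ᶜ.Finite ∧ (∀ α ∈ Ω₀, ∃ β, actsOn g α β) ∧
    ∀ α ∈ Ω₀, ∀ α' ∈ Ω₀, ∀ β β', actsOn g α β → actsOn g α' β' → (r α α' ↔ r β β')

/-- `Fix_V(𝒫)`: the elements of Thompson's group `V` fixing the parts of `r`. -/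
def FixSet (r : Addr → Addr → Prop) : Set (Equiv.Perm Cantor) :=
  { g | IsPrefixSubst g ∧ FixesParts r g }

/-- `Stab_V(𝒫)`: the elements of Thompson's group `V` stabilizing `r`. -/
def StabSet (r : Addr → Addr → Prop) : Set (Equiv.Perm Cantor) :=
  { g | IsPrefixSubst g ∧ Stabilizes r g }

/-- The type system of `s` is a quotient of that of `r`. -/
def IsQuotientOf (s r : Addr → Addr → Prop) : Prop :=
  IsTypeSystem s ∧ ∀ α β, r α β → s α β

/-- A simple type system: the universal relation is a proper quotient, and every
quotient is either the type system itself or the universal one. -/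
def SimpleTS (r : Addr → Addr → Prop) : Prop :=
  IsTypeSystem r ∧ (∃ α β : Addr, ¬ r α β) ∧
    ∀ s : Addr → Addr → Prop, IsQuotientOf s r →
      (∀ α β, s α β ↔ r α β) ∨ ∀ α β, s α β

/-- The type (equivalence class) of the address `α`. -/
def typeOf (r : Addr → Addr → Prop) (α : Addr) : Set Addr := { β | r α β }

/-- `S` is a union of `r`-classes, i.e. a set of types of the type system. -/
def Saturated (r : Addr → Addr → Prop) (S : Set Addr) : Prop :=
  ∀ α ∈ S, ∀ β, r α β → β ∈ S

/-- `S` is child-closed: with each address (type) it contains both of its children. -/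
def ChildClosed (S : Set Addr) : Prop :=
  ∀ α ∈ S, α ++ [false] ∈ S ∧ α ++ [true] ∈ S

/-- The word `γ` determines a path through `S` from (the type of) `α`. -/
def PathThrough (S : Set Addr) (α γ : Addr) : Prop :=
  ∀ ζ : Addr, ζ <+: γ → α ++ ζ ∈ S

/-- `S` is strongly connected. -/
def StronglyConnected (r : Addr → Addr → Prop) (S : Set Addr) : Prop :=
  ∀ α ∈ S, ∀ β ∈ S, ∃ γ : Addr, γ ≠ [] ∧ PathThrough S α γ ∧ r (α ++ γ) β

/-- A nucleus: a (nonempty) child-closed and strongly connected set of types. -/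
def IsNucleus (r : Addr → Addr → Prop) (S : Set Addr) : Prop :=
  S.Nonempty ∧ Saturated r S ∧ ChildClosed S ∧ StronglyConnected r S

/-- `S` consists of exactly one type. -/
def IsSingleType (r : Addr → Addr → Prop) (S : Set Addr) : Prop :=
  ∃ α : Addr, S = typeOf r α

/-- A multinuclear type system: finitely many pairwise disjoint nuclei containing the
types of all sufficiently long addresses. -/
def Multinuclear (r : Addr → Addr → Prop) : Prop :=
  ∃ (k : ℕ) (Q : Fin k → Set Addr), 0 < k ∧ (∀ i, IsNucleus r (Q i)) ∧
    (∀ i j, i ≠ j → Disjoint (Q i) (Q j)) ∧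
    ∃ t : ℕ, 0 < t ∧ ∀ α : Addr, t ≤ α.length → ∃ i, α ∈ Q i

/-- A nuclear type system: a single nucleus containing the types of all sufficiently
long addresses. -/
def Nuclear (r : Addr → Addr → Prop) : Prop :=
  ∃ Q : Set Addr, IsNucleus r Q ∧ ∃ t : ℕ, 0 < t ∧ ∀ α : Addr, t ≤ α.length → α ∈ Q

/-- An atomic binuclear type system: two disjoint singleton nuclei containing the types
of all sufficiently long addresses. -/
def AtomicBinuclear (r : Addr → Addr → Prop) : Prop :=
  ∃ Q₁ Q₂ : Set Addr, IsNucleus r Q₁ ∧ IsNucleus r Q₂ ∧ Disjoint Q₁ Q₂ ∧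
    IsSingleType r Q₁ ∧ IsSingleType r Q₂ ∧
    ∃ t : ℕ, 0 < t ∧ ∀ α : Addr, t ≤ α.length → α ∈ Q₁ ∪ Q₂

/-- The data `(𝒬, ℛ)` witnessing that a type system is quasinuclear. -/
def QuasinuclearData (r : Addr → Addr → Prop) (Q R : Set Addr) : Prop :=
  Q.Nonempty ∧ R.Nonempty ∧ Saturated r Q ∧ Saturated r R ∧ Disjoint Q R ∧
    (∃ t : ℕ, 0 < t ∧ ∀ α : Addr, t ≤ α.length → α ∈ Q ∪ R) ∧
    IsNucleus r R ∧ StronglyConnected r Q ∧ ChildClosed (Q ∪ R) ∧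
    ∀ α ∈ Q, ∀ β ∈ R, ∃ γ : Addr, r (α ++ γ) β

/-- A quasinuclear type system. -/
def Quasinuclear (r : Addr → Addr → Prop) : Prop :=
  ∃ Q R : Set Addr, QuasinuclearData r Q R

/-- `𝒬†`: the types of `𝒬` both of whose children lie in `𝒬`. -/
def QDagger (Q : Set Addr) : Set Addr :=
  { α ∈ Q | α ++ [false] ∈ Q ∧ α ++ [true] ∈ Q }

/-- An atomic quasinuclear type system: the nucleus `ℛ` is a single type. -/
def AtomicQuasinuclear (r : Addr → Addr → Prop) : Prop :=
  ∃ Q R : Set Addr, QuasinuclearData r Q R ∧ IsSingleType r R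

open Filter

section Words

variable {A : Type*}

theorem exists_forall_mem_of_le_length {S : Set (List A)} (hS : S ∈ cofinite) :
    ∃ t : ℕ, 0 < t ∧ ∀ l : List A, t ≤ l.length → l ∈ S := by
  obtain ⟨n, hn⟩ := ((mem_cofinite.1 hS).image List.length).bddAbove
  refine ⟨n + 1, n.succ_pos, fun l hl => by_contra fun hlS => ?_⟩
  exact absurd (hn ⟨l, hlS, rfl⟩) (by omega)

theorem eventually_cofinite_of_cons [Finite A] {p : List A → Prop}
    (hp : ∀ a, ∀ᶠ l in cofinite, p (a :: l)) : ∀ᶠ l in cofinite, p l := by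
  have hfin : (insert [] (⋃ a, List.cons a '' {l | ¬p (a :: l)})).Finite :=
    (Set.finite_iUnion fun a => (eventually_cofinite.1 (hp a)).image _).insert _
  refine eventually_cofinite.2 (hfin.subset ?_)
  rintro (_ | ⟨a, l⟩) hl
  · exact Set.mem_insert _ _
  · exact Or.inr (Set.mem_iUnion.2 ⟨a, l, hl, rfl⟩)

end Words

section TypeSystems

variable {r : Addr → Addr → Prop} {S T : Set Addr} {α β γ : Addr}

theorem Coherent.append (hc : Coherent r) (h : r α β) (γ : Addr) : r (α ++ γ) (β ++ γ) := by
  induction γ using List.reverseRecOn with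
  | nil => simpa only [List.append_nil] using h
  | append_singleton γ b ih =>
    simp only [← List.append_assoc]
    cases b
    exacts [(hc _ _ ih).1, (hc _ _ ih).2]

theorem ChildClosed.append_mem (hS : ChildClosed S) (hα : α ∈ S) (γ : Addr) : α ++ γ ∈ S := by
  induction γ using List.reverseRecOn with
  | nil => simpa only [List.append_nil] using hα
  | append_singleton γ b ih =>
    rw [← List.append_assoc]
    cases b
    exacts [(hS _ ih).1, (hS _ ih).2]

theorem ChildClosed.union (hS : ChildClosed S) (hT : ChildClosed T) : ChildClosed (S ∪ T) := by
  rintro α (hα | hα)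
  · exact ⟨Or.inl (hS α hα).1, Or.inl (hS α hα).2⟩
  · exact ⟨Or.inr (hT α hα).1, Or.inr (hT α hα).2⟩

theorem Saturated.union (hS : Saturated r S) (hT : Saturated r T) : Saturated r (S ∪ T) := by
  rintro α (hα | hα) β hαβ
  · exact Or.inl (hS α hα β hαβ)
  · exact Or.inr (hT α hα β hαβ)

/-- The reduced closure of the relation that collapses `S` to a point: almost all common
extensions of the two addresses are equivalent or both lie in `S`. For a child-closed set `S` of
types it is the finest quotient identifying the members of `S`. -/
def collapse (r : Addr → Addr → Prop) (S : Set Addr) (α β : Addr) : Prop :=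
  ∀ᶠ γ in cofinite, r (α ++ γ) (β ++ γ) ∨ α ++ γ ∈ S ∧ β ++ γ ∈ S

theorem equivalence_collapse (he : Equivalence r) (hS : Saturated r S) :
    Equivalence (collapse r S) where
  refl _ := Eventually.of_forall fun _ => Or.inl (he.refl _)
  symm h := h.mono fun _ => Or.imp he.symm And.symm
  trans hαβ hβδ := by
    filter_upwards [hαβ, hβδ] with γ h h'
    rcases h with h | ⟨hα, hβ⟩ <;> rcases h' with h' | ⟨hβ', hδ⟩
    · exact Or.inl (he.trans h h')
    · exact Or.inr ⟨hS _ hβ' _ (he.symm h), hδ⟩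
    · exact Or.inr ⟨hα, hS _ hβ _ h'⟩
    · exact Or.inr ⟨hα, hδ⟩

theorem coherent_collapse : Coherent (collapse r S) := by
  intro α β h
  have hchild (b : Bool) : collapse r S (α ++ [b]) (β ++ [b]) := by
    simpa only [collapse, List.append_assoc, List.singleton_append] using
      (List.cons_injective (a := b)).tendsto_cofinite.eventually h
  exact ⟨hchild false, hchild true⟩

theorem reduced_collapse : Reduced (collapse r S) := by
  intro α β hfalse htrue
  refine eventually_cofinite_of_cons (Bool.forall_bool.2 ⟨?_, ?_⟩)
  · simpa only [collapse, List.append_assoc, List.singleton_append] using hfalse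
  · simpa only [collapse, List.append_assoc, List.singleton_append] using htrue

theorem isQuotientOf_collapse (he : Equivalence r) (hc : Coherent r) (hS : Saturated r S) :
    IsQuotientOf (collapse r S) r :=
  ⟨⟨equivalence_collapse he hS, coherent_collapse, reduced_collapse⟩,
    fun _ _ h => Eventually.of_forall fun γ => Or.inl (hc.append h γ)⟩

theorem SimpleTS.mem_cofinite_of_childClosed (hr : SimpleTS r) (hsat : Saturated r S)
    (hS : ChildClosed S) (hα : α ∈ S) (hβ : β ∈ S) (hαβ : ¬r α β) : S ∈ cofinite := by
  obtain ⟨⟨he, hc, -⟩, -, hsimple⟩ := hr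
  have hcollapse : collapse r S α β :=
    Eventually.of_forall fun γ => Or.inr ⟨hS.append_mem hα γ, hS.append_mem hβ γ⟩
  have huniv : ∀ δ ε, collapse r S δ ε :=
    (hsimple _ (isQuotientOf_collapse he hc hsat)).resolve_left
      fun heq => hαβ ((heq α β).1 hcollapse)
  filter_upwards [huniv [] α] with γ hγ
  rcases hγ with hγ | ⟨hγ, -⟩
  · exact hsat _ (hS.append_mem hα γ) _ (he.symm hγ)
  · exact hγ

/-- The addresses equivalent to both of their children, i.e. those whose type is a nucleus on its
own. -/
def atomicAddrs (r : Addr → Addr → Prop) : Set Addr :=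
  {α | r (α ++ [false]) α ∧ r (α ++ [true]) α}

theorem saturated_atomicAddrs (he : Equivalence r) (hc : Coherent r) :
    Saturated r (atomicAddrs r) := fun _ hα _ hαβ =>
  ⟨he.trans (he.symm (hc _ _ hαβ).1) (he.trans hα.1 hαβ),
    he.trans (he.symm (hc _ _ hαβ).2) (he.trans hα.2 hαβ)⟩

theorem childClosed_atomicAddrs (he : Equivalence r) (hc : Coherent r) :
    ChildClosed (atomicAddrs r) := fun α hα =>
  ⟨saturated_atomicAddrs he hc α hα _ (he.symm hα.1),
    saturated_atomicAddrs he hc α hα _ (he.symm hα.2)⟩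

theorem isNucleus_typeOf (he : Equivalence r) (hc : Coherent r) (hα : α ∈ atomicAddrs r) :
    IsNucleus r (typeOf r α) := by
  have hclosed : ChildClosed (typeOf r α) := fun β hαβ =>
    have hβ := saturated_atomicAddrs he hc α hα β hαβ
    ⟨he.trans hαβ (he.symm hβ.1), he.trans hαβ (he.symm hβ.2)⟩
  refine ⟨⟨α, he.refl α⟩, fun β hαβ δ hβδ => he.trans hαβ hβδ, hclosed, ?_⟩
  intro β hβ δ hδ
  exact ⟨[false], List.cons_ne_nil _ _, fun ζ _ => hclosed.append_mem hβ ζ,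
    he.trans (he.symm (hclosed β hβ).1) hδ⟩

theorem disjoint_typeOf (he : Equivalence r) (hαβ : ¬r α β) :
    Disjoint (typeOf r α) (typeOf r β) :=
  Set.disjoint_left.2 fun _ hα hβ => hαβ (he.trans hα (he.symm hβ))

theorem SimpleTS.atomicBinuclear (hr : SimpleTS r) (hα : α ∈ atomicAddrs r)
    (hβ : β ∈ atomicAddrs r) (hαβ : ¬r α β) : AtomicBinuclear r := by
  obtain ⟨he, hc, -⟩ := hr.1
  have hαnuc@⟨_, hαsat, hαclosed, _⟩ := isNucleus_typeOf he hc hα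
  have hβnuc@⟨_, hβsat, hβclosed, _⟩ := isNucleus_typeOf he hc hβ
  have hlong : typeOf r α ∪ typeOf r β ∈ cofinite :=
    hr.mem_cofinite_of_childClosed (hαsat.union hβsat) (hαclosed.union hβclosed)
      (Or.inl (he.refl α)) (Or.inr (he.refl β)) hαβ
  exact ⟨_, _, hαnuc, hβnuc, disjoint_typeOf he hαβ, ⟨α, rfl⟩, ⟨β, rfl⟩,
    exists_forall_mem_of_le_length hlong⟩

/-- The set of types of the proper descendants of `α`, as a saturated set of addresses. -/
def properDescendants (r : Addr → Addr → Prop) (α : Addr) : Set Addr :=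
  {β | ∃ γ : Addr, γ ≠ [] ∧ r (α ++ γ) β}

theorem append_mem_properDescendants (he : Equivalence r) (hγ : γ ≠ []) :
    α ++ γ ∈ properDescendants r α :=
  ⟨γ, hγ, he.refl _⟩

theorem saturated_properDescendants (he : Equivalence r) (α : Addr) :
    Saturated r (properDescendants r α) := fun _ ⟨γ, hγ, h⟩ _ hβδ =>
  ⟨γ, hγ, he.trans h hβδ⟩

theorem childClosed_properDescendants (hc : Coherent r) (α : Addr) :
    ChildClosed (properDescendants r α) := by
  rintro β ⟨γ, hγ, h⟩
  have hchild (b : Bool) : β ++ [b] ∈ properDescendants r α :=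
    ⟨γ ++ [b], List.append_ne_nil_of_left_ne_nil hγ _, by
      simpa only [List.append_assoc] using hc.append h [b]⟩
  exact ⟨hchild false, hchild true⟩

theorem properDescendants_subset (he : Equivalence r) (hc : Coherent r) (hαβ : r α β) :
    properDescendants r β ⊆ properDescendants r α := fun _ ⟨γ, hγ, h⟩ =>
  ⟨γ, hγ, he.trans (hc.append hαβ γ) h⟩

theorem finite_range_properDescendants (he : Equivalence r) (hc : Coherent r)
    (hfin : (Set.range (typeOf r)).Finite) : (Set.range (properDescendants r)).Finite := by
  have hfactors : (properDescendants r).FactorsThrough (typeOf r) := fun α β h => by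
    have hαβ : r α β := show β ∈ typeOf r α from h ▸ he.refl β
    exact (properDescendants_subset he hc (he.symm hαβ)).antisymm
      (properDescendants_subset he hc hαβ)
  rw [← hfactors.extend_comp fun _ => ∅, Set.range_comp]
  exact hfin.image _

theorem mem_atomicAddrs_of_properDescendants_equiv (he : Equivalence r) (hred : Reduced r)
    (h : ∀ β ∈ properDescendants r α, ∀ δ ∈ properDescendants r α, r β δ) :
    α ∈ atomicAddrs r := by
  have hequiv {γ δ : Addr} (hγ : γ ≠ []) (hδ : δ ≠ []) : r (α ++ γ) (α ++ δ) :=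
    h _ (append_mem_properDescendants he hγ) _ (append_mem_properDescendants he hδ)
  have hchild (b : Bool) : r (α ++ [b]) α := by
    apply hred <;> rw [List.append_assoc] <;> exact hequiv (by simp) (by simp)
  exact ⟨hchild false, hchild true⟩

theorem SimpleTS.properDescendants_mem_cofinite (hr : SimpleTS r) (hα : α ∉ atomicAddrs r) :
    properDescendants r α ∈ cofinite := by
  obtain ⟨he, hc, hred⟩ := hr.1
  have hmany : ∃ β ∈ properDescendants r α, ∃ δ ∈ properDescendants r α, ¬r β δ := by
    contrapose! hα
    exact mem_atomicAddrs_of_properDescendants_equiv he hred hα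
  obtain ⟨β, hβ, δ, hδ, hβδ⟩ := hmany
  exact hr.mem_cofinite_of_childClosed (saturated_properDescendants he α)
    (childClosed_properDescendants hc α) hβ hδ hβδ

theorem SimpleTS.mem_properDescendants_of_mem_atomicAddrs (hr : SimpleTS r)
    (hα : α ∉ atomicAddrs r) (hβ : β ∈ atomicAddrs r) : β ∈ properDescendants r α := by
  obtain ⟨he, hc, -⟩ := hr.1
  obtain ⟨-, -, hclosed, -⟩ := isNucleus_typeOf he hc hβ
  obtain ⟨γ, hγ⟩ := ((List.append_right_injective β).tendsto_cofinite.eventually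
    (hr.properDescendants_mem_cofinite hα)).exists
  exact saturated_properDescendants he α _ hγ _ (he.symm (hclosed.append_mem (he.refl β) γ))

/-- The non-atomic addresses whose type is reached from every non-atomic address. Its types form
the strongly connected part `𝒬` of the classification. -/
def nonatomicCore (r : Addr → Addr → Prop) : Set Addr :=
  {β | β ∉ atomicAddrs r ∧ ∀ α ∉ atomicAddrs r, β ∈ properDescendants r α}

theorem saturated_nonatomicCore (he : Equivalence r) (hc : Coherent r) :
    Saturated r (nonatomicCore r) := fun α hα β hαβ =>
  ⟨fun hβ => hα.1 (saturated_atomicAddrs he hc β hβ α (he.symm hαβ)),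
    fun δ hδ => saturated_properDescendants he δ α (hα.2 δ hδ) β hαβ⟩

theorem disjoint_nonatomicCore_atomicAddrs : Disjoint (nonatomicCore r) (atomicAddrs r) :=
  Set.disjoint_left.2 fun _ hα => hα.1

theorem append_mem_nonatomicCore (hc : Coherent r) (hα : α ∈ nonatomicCore r)
    (hγ : α ++ γ ∉ atomicAddrs r) : α ++ γ ∈ nonatomicCore r :=
  ⟨hγ, fun δ hδ => (childClosed_properDescendants hc δ).append_mem (hα.2 δ hδ) γ⟩

theorem childClosed_nonatomicCore_union (he : Equivalence r) (hc : Coherent r) :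
    ChildClosed (nonatomicCore r ∪ atomicAddrs r) := by
  rintro α (hα | hα)
  · have hchild (b : Bool) : α ++ [b] ∈ nonatomicCore r ∪ atomicAddrs r :=
      or_iff_not_imp_right.2 (append_mem_nonatomicCore hc hα)
    exact ⟨hchild false, hchild true⟩
  · exact (childClosed_atomicAddrs he hc α hα).imp Or.inr Or.inr

theorem stronglyConnected_nonatomicCore (he : Equivalence r) (hc : Coherent r) :
    StronglyConnected r (nonatomicCore r) := by
  intro α hα β hβ
  obtain ⟨γ, hγ, h⟩ := hβ.2 α hα.1
  refine ⟨γ, hγ, ?_, h⟩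
  -- A path entering the atomic addresses cannot leave them again, but `β` is not atomic.
  rintro ζ ⟨η, rfl⟩
  refine append_mem_nonatomicCore hc hα fun hζ => hβ.1 ?_
  rw [← List.append_assoc] at h
  exact saturated_atomicAddrs he hc _ ((childClosed_atomicAddrs he hc).append_mem hζ η) β h

theorem SimpleTS.nonatomicCore_union_mem_cofinite (hr : SimpleTS r)
    (hfin : (Set.range (typeOf r)).Finite) :
    nonatomicCore r ∪ atomicAddrs r ∈ cofinite := by
  have hfinite : (properDescendants r '' (atomicAddrs r)ᶜ).Finite :=
    (finite_range_properDescendants hr.1.1 hr.1.2.1 hfin).subset (Set.image_subset_range _ _)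
  have hreached : ⋂₀ (properDescendants r '' (atomicAddrs r)ᶜ) ∈ cofinite :=
    (sInter_mem hfinite).2 <| Set.forall_mem_image.2 fun _ => hr.properDescendants_mem_cofinite
  filter_upwards [hreached] with β hβ
  exact or_iff_not_imp_right.2 fun hatomic =>
    ⟨hatomic, fun α hα => hβ _ (Set.mem_image_of_mem _ hα)⟩

theorem SimpleTS.nuclear_of_atomicAddrs_eq_empty (hr : SimpleTS r)
    (hfin : (Set.range (typeOf r)).Finite) (hempty : atomicAddrs r = ∅) : Nuclear r := by
  obtain ⟨he, hc, -⟩ := hr.1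
  have hlong := hr.nonatomicCore_union_mem_cofinite hfin
  have hclosed := childClosed_nonatomicCore_union he hc
  rw [hempty, Set.union_empty] at hlong hclosed
  exact ⟨nonatomicCore r, ⟨nonempty_of_mem hlong, saturated_nonatomicCore he hc, hclosed,
    stronglyConnected_nonatomicCore he hc⟩, exists_forall_mem_of_le_length hlong⟩

theorem SimpleTS.nuclear_of_nonatomicCore_eq_empty (hr : SimpleTS r)
    (hfin : (Set.range (typeOf r)).Finite) (hempty : nonatomicCore r = ∅)
    (hnuc : IsNucleus r (atomicAddrs r)) : Nuclear r := by
  have hlong := hr.nonatomicCore_union_mem_cofinite hfin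
  rw [hempty, Set.empty_union] at hlong
  exact ⟨atomicAddrs r, hnuc, exists_forall_mem_of_le_length hlong⟩

theorem SimpleTS.quasinuclearData (hr : SimpleTS r) (hfin : (Set.range (typeOf r)).Finite)
    (hne : (nonatomicCore r).Nonempty) (hnuc : IsNucleus r (atomicAddrs r)) :
    QuasinuclearData r (nonatomicCore r) (atomicAddrs r) := by
  obtain ⟨he, hc, -⟩ := hr.1
  refine ⟨hne, hnuc.1, saturated_nonatomicCore he hc, saturated_atomicAddrs he hc,
    disjoint_nonatomicCore_atomicAddrs,
    exists_forall_mem_of_le_length (hr.nonatomicCore_union_mem_cofinite hfin), hnuc,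
    stronglyConnected_nonatomicCore he hc, childClosed_nonatomicCore_union he hc, ?_⟩
  intro α hα β hβ
  obtain ⟨γ, -, hγ⟩ := hr.mem_properDescendants_of_mem_atomicAddrs hα.1 hβ
  exact ⟨γ, hγ⟩

end TypeSystems

/-- A finite simple type system is nuclear, atomic binuclear, or
atomic quasinuclear. -/
theorem finite_simple_type_system_classification
    (r : Addr → Addr → Prop) (hr : SimpleTS r)
    (hfin : (Set.range (typeOf r)).Finite) :
    Nuclear r ∨ AtomicBinuclear r ∨ AtomicQuasinuclear r := by
  obtain ⟨he, hc, -⟩ := hr.1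
  by_cases hequiv : ∀ α ∈ atomicAddrs r, ∀ β ∈ atomicAddrs r, r α β
  · rcases (atomicAddrs r).eq_empty_or_nonempty with hempty | ⟨ρ, hρ⟩
    · exact Or.inl (hr.nuclear_of_atomicAddrs_eq_empty hfin hempty)
    have htype : atomicAddrs r = typeOf r ρ :=
      Set.Subset.antisymm (hequiv ρ hρ) (saturated_atomicAddrs he hc ρ hρ)
    have hnuc : IsNucleus r (atomicAddrs r) := htype ▸ isNucleus_typeOf he hc hρ
    rcases (nonatomicCore r).eq_empty_or_nonempty with hempty | hne
    · exact Or.inl (hr.nuclear_of_nonatomicCore_eq_empty hfin hempty hnuc)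
    · exact Or.inr (Or.inr ⟨_, _, hr.quasinuclearData hfin hne hnuc, ρ, htype⟩)
  · push Not at hequiv
    obtain ⟨α, hα, β, hβ, hαβ⟩ := hequiv
    exact Or.inr (Or.inl (hr.atomicBinuclear hα hβ hαβ))
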